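/- Fix integers n ≥ 2 and l ≥ 1. Writing k_l(π) for the number of blocks of size l in a non-crossing partition π of [n], the second factorial moment satisfies Σ_{π ∈ NC(n)} k_l(π)·(k_l(π) − 1) = n · binom(2n − 2l − 2, n − 2) (with the convention that binom(a,b) = 0 when a < b). -/

import Mathlib

/-- A finite partition of `Fin n` (representing `[n] = {1, …, n}`) is *non-crossing* if
there are no indices `a < b < c < d` with `a, c` in one block and `b, d` in a
different block. -/
def IsNonCrossing {n : ℕ} (P : Finpartition (Finset.univ : Finset (Fin n))) : Prop :=
  ∀ a b c d : Fin n, a < b → b < c → c < d →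
    ∀ B ∈ P.parts, ∀ B' ∈ P.parts,
      a ∈ B → c ∈ B → b ∈ B' → d ∈ B' → B = B'

/-- The type of non-crossing partitions of `[n]`. -/
def NCPart (n : ℕ) : Type :=
  {P : Finpartition (Finset.univ : Finset (Fin n)) // IsNonCrossing P}

noncomputable instance (n : ℕ) : Fintype (NCPart n) :=
  Fintype.ofInjective (fun P => P.1.parts)
    (fun _ _ h => Subtype.ext (Finpartition.ext h))

/-- The number of blocks of a non-crossing partition. -/
def numBlocks {n : ℕ} (P : NCPart n) : ℕ := P.1.parts.card

/-- The number of blocks of size `l` of a non-crossing partition. -/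
def numBlocksOfSize {n : ℕ} (l : ℕ) (P : NCPart n) : ℕ :=
  (P.1.parts.filter fun B => B.card = l).card

/-!
Send every element of `[n]` to the least element of its block. Counting the preimages turns a
non-crossing partition into a sequence `b₀, …, bₙ` with sum `n` all of whose walk heights
`∑ j < k, (b j - 1)`, `k ≤ n`, are nonnegative, and the blocks of size `l` into the entries equal
to `l`. This is a bijection: the least element of the block of `x` is recovered as the last time
`i ≤ x` at which the walk is not higher than at time `x + 1`.

By the cycle lemma exactly one of the `n + 1` rotations of a sequence with sum `n` has nonnegative
heights, so factorial moments over non-crossing partitions are, up to the factor `n + 1`, factorial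
moments over all sequences with sum `n`, where one only has to choose the positions of the
entries `l`.
-/

open Finset

section CycleLemma

theorem sum_eq_card_nsmul_sum_filter_of_existsUnique {ι β M : Type*} [Fintype ι] [AddCommMonoid M]
    {s : Finset β} {p : β → Prop} [DecidablePred p] {F : β → M} (e : ι → Equiv.Perm β)
    (hs : ∀ i b, e i b ∈ s ↔ b ∈ s) (hF : ∀ i b, F (e i b) = F b)
    (hp : ∀ b ∈ s, ∃! i, p (e i b)) :
    ∑ b ∈ s, F b = Fintype.card ι • ∑ b ∈ s with p b, F b := by
  calc ∑ b ∈ s, F b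
      = ∑ b ∈ s, ∑ i, if p (e i b) then F b else 0 := by
        refine sum_congr rfl fun b hb => ?_
        obtain ⟨i, hi, huniq⟩ := hp b hb
        rw [sum_eq_single i (fun j _ hj => if_neg fun h => hj (huniq j h)) (by simp), if_pos hi]
    _ = ∑ i, ∑ b ∈ s, if p (e i b) then F (e i b) else 0 := by
        rw [sum_comm]; simp only [hF]
    _ = ∑ _i : ι, ∑ b ∈ s with p b, F b := by
        refine sum_congr rfl fun i _ => ?_
        rw [sum_filter]
        exact sum_equiv (e i) (fun b => (hs i b).symm) fun _ _ => rfl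
    _ = Fintype.card ι • ∑ b ∈ s with p b, F b := by
        rw [sum_const, card_univ]

-- `m * h k + k` is periodic with period `m` and takes distinct values on a period; the condition
-- on `r` says that it attains its minimum at `r`.
theorem existsUnique_fin_forall_le_of_add_period {m : ℕ} [NeZero m] {h : ℕ → ℤ}
    (hper : ∀ k, h (k + m) = h k - 1) :
    ∃! r : Fin m, ∀ k < m, h r ≤ h (r + k) := by
  set H : ℕ → ℤ := fun k => m * h k + k with hH
  have H_periodic : Function.Periodic H m := fun k => by
    simp only [hH, hper]; push_cast; ring
  have H_fin (r : Fin m) (k : ℕ) : ∃ j < m, H (r + j) = H k := by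
    refine ⟨(k + (m - r)) % m, Nat.mod_lt _ (NeZero.pos m), ?_⟩
    rw [← H_periodic.map_mod_nat (r + _), Nat.add_mod_mod,
      show (r : ℕ) + (k + (m - r)) = k + m by omega, Nat.add_mod_right, H_periodic.map_mod_nat]
  have le_iff (r k : ℕ) (hk : k < m) : h r ≤ h (r + k) ↔ H r ≤ H (r + k) := by
    simp only [hH]; push_cast
    constructor <;> intro hle <;> nlinarith
  have forall_le_iff (r : Fin m) : (∀ k < m, h r ≤ h (r + k)) ↔ ∀ k, H r ≤ H k := by
    constructor
    · intro hr k
      obtain ⟨j, hj, hjk⟩ := H_fin r k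
      exact hjk ▸ (le_iff r j hj).1 (hr j hj)
    · exact fun hr k hk => (le_iff r k hk).2 (hr _)
  simp only [forall_le_iff]
  obtain ⟨r, hr⟩ := Finite.exists_min fun r : Fin m => H r
  have r_min (k : ℕ) : H r ≤ H k := by
    rw [← H_periodic.map_mod_nat k]
    exact hr ⟨k % m, Nat.mod_lt _ (NeZero.pos m)⟩
  refine ⟨r, r_min, fun s hs => ?_⟩
  have heq : (m * h s + s : ℤ) = m * h r + r := le_antisymm (hs r) (r_min s)
  have hmod : (s : ℕ) ≡ r [MOD m] := by
    rw [← Int.natCast_modEq_iff]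
    exact (Int.modEq_iff_dvd.2 ⟨h s - h r, by linarith⟩)
  exact Fin.ext (hmod.eq_of_lt_of_lt s.2 r.2)

variable {n : ℕ} (b : Fin (n + 1) → ℕ)

/-- The height after `k` steps of the walk whose steps are `b j - 1`, where `b` is repeated
periodically. The sequences of length `n + 1` with sum `n` whose walk stays nonnegative up to time
`n` are the Łukasiewicz words of length `n`, followed by a `0`. -/
def walk (k : ℕ) : ℤ := ∑ j ∈ range k, ((b (Fin.ofNat (n + 1) j) : ℤ) - 1)

theorem walk_zero : walk b 0 = 0 := rfl

theorem walk_sub_walk {i k : ℕ} (hik : i ≤ k) :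
    walk b k - walk b i = ∑ j ∈ Ico i k, ((b (Fin.ofNat (n + 1) j) : ℤ) - 1) :=
  (sum_Ico_eq_sub _ hik).symm

theorem walk_succ (j : Fin (n + 1)) : walk b (j + 1) = walk b j + (b j - 1) := by
  simp only [walk, sum_range_succ, Fin.ofNat_val_eq_self]

theorem walk_length : walk b (n + 1) = ∑ j, (b j : ℤ) - (n + 1) := by
  rw [walk, ← Fin.sum_univ_eq_sum_range fun j => (b (Fin.ofNat (n + 1) j) : ℤ) - 1]
  simp [sum_sub_distrib]

theorem walk_add (k m : ℕ) :
    walk b (k + m) = walk b k + walk (fun j => b (j + Fin.ofNat (n + 1) k)) m := by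
  have ofNat_add (x : ℕ) :
      Fin.ofNat (n + 1) (k + x) = Fin.ofNat (n + 1) x + Fin.ofNat (n + 1) k := by
    ext; simp [Fin.val_add, add_comm]
  simp only [walk, sum_range_add, ofNat_add]

variable {b}

theorem walk_add_length (hb : ∑ j, b j = n) (k : ℕ) : walk b (k + (n + 1)) = walk b k - 1 := by
  have hrot : ∑ j, b (j + Fin.ofNat (n + 1) k) = n :=
    (Equiv.sum_comp (Equiv.addRight (Fin.ofNat (n + 1) k)) b).trans hb
  rw [walk_add, walk_length, ← Nat.cast_sum, hrot]
  ring

theorem existsUnique_rotation_walk_nonneg (hb : ∑ j, b j = n) :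
    ∃! r : Fin (n + 1), ∀ k ≤ n, 0 ≤ walk (fun j => b (j + r)) k := by
  have walk_rotation (r : Fin (n + 1)) (k : ℕ) :
      walk (fun j => b (j + r)) k = walk b (r + k) - walk b r := by
    simp [walk_add]
  simpa [walk_rotation, Nat.lt_succ_iff] using
    existsUnique_fin_forall_le_of_add_period (walk_add_length hb)

variable (n) in
/-- The sequences `b₀, …, bₙ` with sum `n` whose walk is nonnegative up to time `n`; its height at
time `n + 1` is then `-1`. -/
def ballotSequences : Finset (Fin (n + 1) → ℕ) :=
  {b ∈ piAntidiag univ n | ∀ k ≤ n, 0 ≤ walk b k}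

theorem mem_ballotSequences : b ∈ ballotSequences n ↔ ∑ j, b j = n ∧ ∀ k ≤ n, 0 ≤ walk b k := by
  simp [ballotSequences]

theorem sum_piAntidiag_eq_nsmul_sum_ballotSequences {M : Type*} [AddCommMonoid M]
    {F : (Fin (n + 1) → ℕ) → M} (hF : ∀ r b, F (fun j => b (j + r)) = F b) :
    ∑ b ∈ piAntidiag univ n, F b = (n + 1) • ∑ b ∈ ballotSequences n, F b := by
  have key := sum_eq_card_nsmul_sum_filter_of_existsUnique (s := piAntidiag univ n)
    (p := fun b => ∀ k ≤ n, 0 ≤ walk b k) (F := F)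
    (fun r : Fin (n + 1) => (Equiv.addRight r).symm.arrowCongr (Equiv.refl ℕ))
    (fun r b => by
      simpa using (Equiv.sum_comp (Equiv.addRight r) b).congr_left)
    hF
    (fun b hb => existsUnique_rotation_walk_nonneg (mem_piAntidiag.1 hb).1)
  rwa [Fintype.card_fin] at key

end CycleLemma

section LastPassage

/-- The last time `i ≤ x` at which the walk with heights `h` is not higher than at time `x + 1`.
Without such a time the value is `0`; under the assumption `h 0 ≤ h (x + 1)`, time `0`
qualifies. -/
def lastPassage (h : ℕ → ℤ) (x : ℕ) : ℕ := Nat.findGreatest (fun i => h i ≤ h (x + 1)) x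

variable {h : ℕ → ℤ} {i k n x y : ℕ}

theorem lastPassage_le : lastPassage h x ≤ x := Nat.findGreatest_le x

theorem height_lastPassage_le (h0 : h 0 ≤ h (x + 1)) : h (lastPassage h x) ≤ h (x + 1) :=
  Nat.findGreatest_spec (P := fun i => h i ≤ h (x + 1)) (Nat.zero_le x) h0

theorem height_lt_of_lastPassage_lt (hk : lastPassage h x < k) (hkx : k ≤ x) : h (x + 1) < h k :=
  not_le.1 (Nat.findGreatest_is_greatest hk hkx)

theorem lastPassage_eq (hix : i ≤ x) (hi : h i ≤ h (x + 1))
    (hlt : ∀ k, i < k → k ≤ x → h (x + 1) < h k) : lastPassage h x = i :=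
  Nat.findGreatest_eq_iff.2 ⟨hix, fun _ => hi, fun k hik hkx => (hlt k hik hkx).not_ge⟩

theorem lastPassage_le_lastPassage (h0 : h 0 ≤ h (x + 1)) (hxy : lastPassage h x ≤ y)
    (hyx : y ≤ x) : lastPassage h x ≤ lastPassage h y := by
  rcases hyx.eq_or_lt with rfl | hyx
  · rfl
  · exact Nat.le_findGreatest hxy ((height_lastPassage_le h0).trans
      (height_lt_of_lastPassage_lt (Nat.lt_succ_of_le hxy) hyx).le)

-- On a fibre the heights `h (x + 1)` are distinct, since `h (y + 1) < h (x + 1)` for `x < y`, and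
-- they lie between `h i` and `h (i + 1)`.
theorem card_lastPassage_eq_le (h0 : ∀ k ≤ n, h 0 ≤ h k) (i : ℕ) :
    #{x : Fin n | lastPassage h x = i} ≤ (h (i + 1) + 1 - h i).toNat := by
  rw [← Int.card_Ico]
  refine card_le_card_of_injOn (fun x => h (x + 1)) (fun x hx => ?_) fun x hx y hy hxy => ?_
  · have hxi : lastPassage h x = i := by simpa using hx
    have hlow : h i ≤ h (x + 1) := hxi ▸ height_lastPassage_le (h0 _ x.2)
    have hupp : h (x + 1) ≤ h (i + 1) := by
      rcases (hxi ▸ lastPassage_le : i ≤ x).eq_or_lt with rfl | hix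
      · rfl
      · exact (height_lt_of_lastPassage_lt (hxi ▸ Nat.lt_succ_self i) hix).le
    simp only [coe_Ico, Set.mem_Ico]
    omega
  · have height_lt {x y : Fin n} (hx : lastPassage h x = i) (hy : lastPassage h y = i)
        (hlt : x < y) : h (y + 1) < h (x + 1) :=
      height_lt_of_lastPassage_lt (by have := lastPassage_le (h := h) (x := x); omega) hlt
    simp only [coe_filter, mem_univ, true_and, Set.mem_ofPred_eq] at hx hy
    rcases lt_trichotomy x y with hlt | rfl | hlt
    · exact absurd hxy (height_lt hx hy hlt).ne'
    · rfl
    · exact absurd hxy (height_lt hy hx hlt).ne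

end LastPassage

theorem mem_parts_iff_exists_part_eq {α : Type*} [DecidableEq α] {s : Finset α}
    {P : Finpartition s} {B : Finset α} : B ∈ P.parts ↔ ∃ x ∈ s, P.part x = B := by
  refine ⟨fun hB => P.part_surjOn hB, ?_⟩
  rintro ⟨x, hx, rfl⟩
  exact P.part_mem.2 hx

namespace NCPart

variable {n : ℕ} (π : NCPart n) {x y : Fin n}

/-- The least element of the block of `x`. -/
def blockMin (x : Fin n) : Fin n :=
  (π.1.part x).min' (π.1.part_nonempty.2 (mem_univ x))

theorem blockMin_mem_part (x : Fin n) : π.blockMin x ∈ π.1.part x := min'_mem _ _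

theorem blockMin_le (x : Fin n) : π.blockMin x ≤ x :=
  min'_le _ _ (π.1.mem_part (mem_univ x))

theorem part_blockMin (x : Fin n) : π.1.part (π.blockMin x) = π.1.part x :=
  (π.1.mem_part_iff_part_eq_part (mem_univ _) (mem_univ _)).1 (π.blockMin_mem_part x)

theorem blockMin_eq_blockMin_iff : π.blockMin x = π.blockMin y ↔ π.1.part x = π.1.part y := by
  refine ⟨fun hxy => ?_, fun hxy => by simp only [blockMin, hxy]⟩
  rw [← part_blockMin, hxy, part_blockMin]

theorem mem_part_iff : x ∈ π.1.part y ↔ π.blockMin x = π.blockMin y := by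
  rw [blockMin_eq_blockMin_iff, π.1.mem_part_iff_part_eq_part (mem_univ _) (mem_univ _)]

theorem blockMin_le_blockMin (hxy : π.blockMin x ≤ y) (hyx : y ≤ x) :
    π.blockMin x ≤ π.blockMin y := by
  by_contra! hlt
  have hne : π.1.part y ≠ π.1.part x := fun h =>
    hlt.ne (π.blockMin_eq_blockMin_iff.2 h)
  have hxy' : π.blockMin x < y := hxy.lt_of_ne fun h => hne (h ▸ π.part_blockMin x)
  have hyx' : y < x := hyx.lt_of_ne fun h => hne (h ▸ rfl)
  exact hne <| π.2 _ _ _ _ hlt hxy' hyx'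
    _ (π.1.part_mem.2 (mem_univ y)) _ (π.1.part_mem.2 (mem_univ x))
    (π.blockMin_mem_part y) (π.1.mem_part (mem_univ y))
    (π.blockMin_mem_part x) (π.1.mem_part (mem_univ x))

theorem blockMin_injective : Function.Injective (blockMin : NCPart n → Fin n → Fin n) := by
  intro π ρ h
  have hpart (x : Fin n) : π.1.part x = ρ.1.part x := by
    ext y
    rw [mem_part_iff, mem_part_iff, h]
  refine Subtype.ext (Finpartition.ext (Finset.ext fun B => ?_))
  simp only [mem_parts_iff_exists_part_eq, hpart]

theorem exists_blockMin_eq {f : Fin n → Fin n} (hle : ∀ x, f x ≤ x)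
    (hnested : ∀ x y, f x ≤ y → y ≤ x → f x ≤ f y) : ∃ π : NCPart n, π.blockMin = f := by
  have hidem (x : Fin n) : f (f x) = f x :=
    (hle _).antisymm (hnested x (f x) le_rfl (hle x))
  classical
  let P : Finpartition (univ : Finset (Fin n)) := Finpartition.ofSetoid (Setoid.ker f)
  have mem_part (x y : Fin n) : y ∈ P.part x ↔ f x = f y :=
    Finpartition.mem_part_ofSetoid_iff_rel
  have eq_of_mem {B : Finset (Fin n)} (hB : B ∈ P.parts) {x y : Fin n} (hx : x ∈ B)
      (hy : y ∈ B) : f x = f y := by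
    rwa [← P.part_eq_of_mem hB hx, mem_part] at hy
  have P_nonCrossing : IsNonCrossing P := by
    intro a b c d hab hbc hcd B hB B' hB' ha hc hb hd
    have hac : f a = f c := eq_of_mem hB ha hc
    have hbd : f b = f d := eq_of_mem hB' hb hd
    have hcb : f c ≤ f b := hnested c b ((hac ▸ hle a).trans hab.le) hbc.le
    have hdc : f d ≤ f c := hnested d c ((hbd ▸ hle b).trans hbc.le) hcd.le
    refine P.eq_of_mem_parts hB hB' ha ?_
    rw [← P.part_eq_of_mem hB' hb, mem_part]
    order
  refine ⟨⟨P, P_nonCrossing⟩, funext fun x => ?_⟩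
  refine le_antisymm (min'_le _ _ ((mem_part x _).2 (hidem x).symm)) (le_min' _ _ _ fun y hy => ?_)
  exact ((mem_part x y).1 hy).trans_le (hle y)

/-- The sequence whose entry at `j` is the size of the block with least element `j`, and `0` if
there is no such block. It has one more entry than there are elements (the last one, always `0`),
because the cycle lemma is about sequences of length `n + 1` with sum `n`. -/
def profile (j : Fin (n + 1)) : ℕ := #{x | (π.blockMin x : ℕ) = j}

theorem sum_profile : ∑ j, π.profile j = n := by
  have h := card_eq_sum_card_fiberwise (s := univ) (t := univ)
    (f := fun x => (π.blockMin x).castSucc) (by simp)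
  simpa [profile, Fin.ext_iff] using h.symm

theorem numBlocksOfSize_eq_card_profile_eq {l : ℕ} (hl : 0 < l) :
    numBlocksOfSize l π = #{j | π.profile j = l} := by
  have eq_part {x : Fin n} {j : Fin (n + 1)} (hx : (π.blockMin x : ℕ) = j) :
      ({y | (π.blockMin y : ℕ) = j} : Finset (Fin n)) = π.1.part x := by
    ext y
    simp [mem_part_iff, ← hx, Fin.ext_iff]
  have exists_blockMin_eq {j : Fin (n + 1)} (hj : π.profile j = l) :
      ∃ x, (π.blockMin x : ℕ) = j := by
    obtain ⟨x, hx⟩ := card_pos.1 (hj ▸ hl)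
    exact ⟨x, by simpa using hx⟩
  symm
  refine card_nbij (fun j => ({y | (π.blockMin y : ℕ) = j} : Finset (Fin n))) ?_ ?_ ?_
  · intro j hj
    have hj : π.profile j = l := by simpa using hj
    obtain ⟨x, hx⟩ := exists_blockMin_eq hj
    exact mem_filter.2 ⟨mem_parts_iff_exists_part_eq.2 ⟨x, mem_univ x, (eq_part hx).symm⟩, hj⟩
  · intro i hi j _ hij
    obtain ⟨x, hx⟩ := exists_blockMin_eq (by simpa using hi)
    have hxj : (π.blockMin x : ℕ) = j := by
      simpa [hx] using Finset.ext_iff.1 hij x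
    exact Fin.ext (hx.symm.trans hxj)
  · intro B hB
    obtain ⟨hB, hBl⟩ := mem_filter.1 hB
    obtain ⟨x, -, rfl⟩ := mem_parts_iff_exists_part_eq.1 hB
    have hx := eq_part (x := x) (j := (π.blockMin x).castSucc) rfl
    exact ⟨_, by simp [profile, ← hBl, ← hx], hx⟩

theorem walk_profile_sub {i k : ℕ} (hik : i ≤ k) (hk : k ≤ n + 1) :
    walk π.profile k - walk π.profile i =
      #{x | i ≤ (π.blockMin x : ℕ) ∧ (π.blockMin x : ℕ) < k} - (k - i : ℤ) := by
  have hfiber : #{x | i ≤ (π.blockMin x : ℕ) ∧ (π.blockMin x : ℕ) < k} =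
      ∑ j ∈ Ico i k, π.profile (Fin.ofNat (n + 1) j) := by
    rw [card_eq_sum_card_fiberwise (f := fun x => (π.blockMin x : ℕ)) (t := Ico i k)
      fun x hx => by simpa using hx]
    refine sum_congr rfl fun j hj => ?_
    have hj' := mem_Ico.1 hj
    have hjn : j % (n + 1) = j := Nat.mod_eq_of_lt (by omega)
    simp only [profile, filter_filter, Fin.ofNat, hjn]
    congr 1
    ext x
    simp only [mem_filter, mem_univ, true_and]
    omega
  rw [walk_sub_walk _ hik, hfiber]
  push_cast [sum_sub_distrib]
  simp [hik]

theorem walk_profile_nonneg {k : ℕ} (hk : k ≤ n) : 0 ≤ walk π.profile k := by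
  have hcard : k ≤ #{x | 0 ≤ (π.blockMin x : ℕ) ∧ (π.blockMin x : ℕ) < k} := by
    calc k = #{x : Fin n | (x : ℕ) < k} := by rw [Fin.card_filter_val_lt, min_eq_right hk]
      _ ≤ _ := card_le_card fun x hx => by
        have hx' : (x : ℕ) < k := by simpa using hx
        simpa using (Fin.le_def.1 (π.blockMin_le x)).trans_lt hx'
  have := π.walk_profile_sub (Nat.zero_le k) (by omega)
  rw [walk_zero] at this
  omega

theorem walk_profile_blockMin_le (x : Fin n) :
    walk π.profile (π.blockMin x) ≤ walk π.profile (x + 1) := by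
  have hsub : Icc (π.blockMin x) x ⊆
      ({y | (π.blockMin x : ℕ) ≤ π.blockMin y ∧ (π.blockMin y : ℕ) < x + 1} : Finset _) := by
    intro y hy
    rw [mem_Icc] at hy
    simpa [Nat.lt_succ_iff] using
      And.intro (π.blockMin_le_blockMin hy.1 hy.2) ((π.blockMin_le y).trans hy.2)
  have hcard := card_le_card hsub
  have hle : (π.blockMin x : ℕ) ≤ x := π.blockMin_le x
  have := π.walk_profile_sub (i := π.blockMin x) (k := x + 1) (by omega) (by omega)
  rw [Fin.card_Icc] at hcard
  omega

theorem walk_profile_lt_of_blockMin_lt {x k : Fin n} (hk : π.blockMin x < k) (hkx : k ≤ x) :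
    walk π.profile (x + 1) < walk π.profile k := by
  have hsub : ({y | (k : ℕ) ≤ π.blockMin y ∧ (π.blockMin y : ℕ) < x + 1} : Finset (Fin n)) ⊆
      Ico k x := by
    intro y hy
    have hy' : k ≤ π.blockMin y ∧ π.blockMin y ≤ x := by
      simpa [Nat.lt_succ_iff] using hy
    refine mem_Ico.2 ⟨hy'.1.trans (π.blockMin_le y), lt_of_not_ge fun hxy => ?_⟩
    exact (π.blockMin_le_blockMin hy'.2 hxy).not_gt (hk.trans_le hy'.1)
  have hcard := card_le_card hsub
  have hle : (k : ℕ) ≤ x := hkx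
  have := π.walk_profile_sub (i := k) (k := x + 1) (by omega) (by omega)
  rw [Fin.card_Ico] at hcard
  omega

theorem lastPassage_walk_profile (x : Fin n) :
    lastPassage (walk π.profile) x = π.blockMin x :=
  lastPassage_eq (π.blockMin_le x) (π.walk_profile_blockMin_le x) fun k hk hkx =>
    π.walk_profile_lt_of_blockMin_lt (k := ⟨k, hkx.trans_lt x.2⟩) hk hkx

theorem profile_injective : Function.Injective (profile : NCPart n → Fin (n + 1) → ℕ) := by
  intro π ρ h
  refine blockMin_injective (funext fun x => Fin.ext ?_)
  rw [← lastPassage_walk_profile, h, lastPassage_walk_profile]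

theorem profile_mem_ballotSequences : π.profile ∈ ballotSequences n :=
  mem_ballotSequences.2 ⟨π.sum_profile, fun _ => π.walk_profile_nonneg⟩

theorem exists_profile_eq {b : Fin (n + 1) → ℕ} (hb : b ∈ ballotSequences n) :
    ∃ π : NCPart n, π.profile = b := by
  obtain ⟨hsum, hnonneg⟩ := mem_ballotSequences.1 hb
  obtain ⟨π, hπ⟩ := exists_blockMin_eq
    (f := fun x => ⟨lastPassage (walk b) x, lastPassage_le.trans_lt x.2⟩)
    (fun x => lastPassage_le)
    (fun x y hxy hyx => lastPassage_le_lastPassage (hnonneg _ x.2) hxy hyx)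
  have hle (j : Fin (n + 1)) : π.profile j ≤ b j := by
    have := card_lastPassage_eq_le (n := n) hnonneg j
    rw [walk_succ] at this
    simp only [profile, hπ]
    omega
  refine ⟨π, funext fun j => ?_⟩
  exact (sum_eq_sum_iff_of_le fun j _ => hle j).1 (π.sum_profile.trans hsum.symm) j (mem_univ j)

theorem sum_numBlocksOfSize_eq_sum_ballotSequences {M : Type*} [AddCommMonoid M] {l : ℕ}
    (hl : 0 < l) (g : ℕ → M) :
    ∑ π : NCPart n, g (numBlocksOfSize l π) = ∑ b ∈ ballotSequences n, g #{j | b j = l} :=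
  sum_nbij profile (fun π _ => π.profile_mem_ballotSequences) profile_injective.injOn
    (fun _ hb => (exists_profile_eq hb).imp fun _ hπ => ⟨mem_coe.2 (mem_univ _), hπ⟩)
    fun π _ => by rw [π.numBlocksOfSize_eq_card_profile_eq hl]

end NCPart

section PrescribedEntries

variable {ι : Type*} [DecidableEq ι]

theorem card_piAntidiag_nat (s : Finset ι) (N : ℕ) : #(piAntidiag s N) = (#s).multichoose N := by
  rw [← card_finsuppAntidiag_nat_eq_multichoose, finsuppAntidiag, card_map, card_attach]

theorem card_filter_piAntidiag_eqOn {μ : Type*} [AddCancelCommMonoid μ] [HasAntidiagonal μ]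
    [DecidableEq μ] {s t : Finset ι} (hts : t ⊆ s) (g : ι → μ) (N : μ) :
    #{b ∈ piAntidiag s (∑ i ∈ t, g i + N) | ∀ i ∈ t, b i = g i} = #(piAntidiag (s \ t) N) := by
  refine card_nbij' (fun b => t.piecewise 0 b) (fun c => t.piecewise g c) ?_ ?_ ?_ ?_
  · intro b hb
    simp only [coe_filter, mem_piAntidiag, Set.mem_ofPred_eq, mem_coe, mem_sdiff] at hb ⊢
    obtain ⟨⟨hsum, hsupp⟩, hbg⟩ := hb
    refine ⟨?_, fun i hi => ?_⟩
    · rw [← sum_sdiff hts, add_comm, sum_congr rfl hbg] at hsum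
      rw [← add_left_cancel hsum]
      exact sum_congr rfl fun i hi => piecewise_eq_of_notMem _ _ _ (mem_sdiff.1 hi).2
    · by_cases hit : i ∈ t <;> simp_all
  · intro c hc
    simp only [coe_filter, mem_piAntidiag, Set.mem_ofPred_eq, mem_coe, mem_sdiff] at hc ⊢
    obtain ⟨hsum, hsupp⟩ := hc
    refine ⟨⟨?_, fun i hi => ?_⟩, fun i hi => piecewise_eq_of_mem _ _ _ hi⟩
    · rw [← sum_sdiff hts, add_comm, ← hsum]
      congr 1
      · exact sum_congr rfl fun i hi => piecewise_eq_of_mem _ _ _ hi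
      · exact sum_congr rfl fun i hi => piecewise_eq_of_notMem _ _ _ (mem_sdiff.1 hi).2
    · by_cases hit : i ∈ t
      · exact hts hit
      · exact (hsupp i (by simpa [hit] using hi)).1
  · intro b hb
    ext i
    by_cases hit : i ∈ t <;> simp_all
  · intro c hc
    ext i
    by_cases hit : i ∈ t
    · have hci : c i = 0 := by
        by_contra hne
        exact (mem_sdiff.1 ((mem_piAntidiag.1 hc).2 i hne)).2 hit
      simp [hit, hci]
    · simp [hit]

theorem sum_choose_card_eq (s : Finset ι) (l r N : ℕ) :
    ∑ b ∈ piAntidiag s (r * l + N), (#{i ∈ s | b i = l}).choose r =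
      (#s).choose r * (#s - r).multichoose N := by
  calc ∑ b ∈ piAntidiag s (r * l + N), (#{i ∈ s | b i = l}).choose r
      = ∑ b ∈ piAntidiag s (r * l + N), #{t ∈ powersetCard r s | ∀ i ∈ t, b i = l} := by
        refine sum_congr rfl fun b _ => ?_
        rw [← card_powersetCard]
        congr 1
        ext t
        simp only [mem_powersetCard, mem_filter, subset_iff, forall_and]
        grind
    _ = ∑ t ∈ powersetCard r s, #{b ∈ piAntidiag s (r * l + N) | ∀ i ∈ t, b i = l} :=
        sum_card_bipartiteAbove_eq_sum_card_bipartiteBelow _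
    _ = ∑ _t ∈ powersetCard r s, (#s - r).multichoose N := by
        refine sum_congr rfl fun t ht => ?_
        obtain ⟨hts, htr⟩ := mem_powersetCard.1 ht
        have h := card_filter_piAntidiag_eqOn hts (fun _ => l) N
        rwa [sum_const, smul_eq_mul, htr, card_piAntidiag_nat, card_sdiff_of_subset hts, htr] at h
    _ = (#s).choose r * (#s - r).multichoose N := by
        rw [sum_const, card_powersetCard, smul_eq_mul]

theorem sum_descFactorial_card_eq (s : Finset ι) (l r N : ℕ) :
    ∑ b ∈ piAntidiag s (r * l + N), (#{i ∈ s | b i = l}).descFactorial r =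
      (#s).descFactorial r * (#s - r).multichoose N := by
  simp only [Nat.descFactorial_eq_factorial_mul_choose, ← mul_sum, sum_choose_card_eq, mul_assoc]

end PrescribedEntries

theorem numBlocksOfSize_mul_le {n : ℕ} (l : ℕ) (π : NCPart n) : numBlocksOfSize l π * l ≤ n := by
  calc numBlocksOfSize l π * l = ∑ B ∈ π.1.parts with #B = l, #B :=
        (sum_const_nat fun B hB => (mem_filter.1 hB).2).symm
    _ ≤ ∑ B ∈ π.1.parts, #B := sum_le_sum_of_subset (filter_subset _ _)
    _ = n := by rw [π.1.sum_card_parts, card_fin]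

theorem succ_mul_sum_descFactorial_numBlocksOfSize {n l : ℕ} (hl : 0 < l) (r : ℕ) :
    (n + 1) * ∑ π : NCPart n, (numBlocksOfSize l π).descFactorial r =
      ∑ b ∈ piAntidiag (univ : Finset (Fin (n + 1))) n, (#{j | b j = l}).descFactorial r := by
  have card_rotation (i : Fin (n + 1)) (b : Fin (n + 1) → ℕ) :
      #{j | b (j + i) = l} = #{j | b j = l} := by
    simp only [card_filter]
    exact Equiv.sum_comp (Equiv.addRight i) fun j => if b j = l then 1 else 0
  rw [NCPart.sum_numBlocksOfSize_eq_sum_ballotSequences hl (Nat.descFactorial · r),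
    sum_piAntidiag_eq_nsmul_sum_ballotSequences fun i b => by rw [card_rotation], smul_eq_mul]

theorem secondFactorialMoment_numBlocksOfSize_general (n l r : ℕ) (hl : 1 ≤ l) :
    ∑ π : NCPart n, (numBlocksOfSize l π).descFactorial (r + 1) =
      if (r + 1) * l ≤ n then
        n.descFactorial r * (2 * n - (r + 1) * l - (r + 1)).choose (n - (r + 1)) else 0 := by
  split_ifs with hrn
  · obtain ⟨N, hN⟩ := Nat.exists_eq_add_of_le hrn
    have hr : r + 1 ≤ n := (Nat.le_mul_of_pos_right _ hl).trans hrn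
    have hchoose : (n - r).multichoose N =
        (2 * n - (r + 1) * l - (r + 1)).choose (n - (r + 1)) := by
      rw [Nat.multichoose_eq,
        show n - r + N - 1 = 2 * n - (r + 1) * l - (r + 1) by omega]
      exact Nat.choose_symm_of_eq_add (by omega)
    have hsum := sum_descFactorial_card_eq (univ : Finset (Fin (n + 1))) l (r + 1) N
    rw [← hN, ← succ_mul_sum_descFactorial_numBlocksOfSize hl, card_fin,
      Nat.succ_descFactorial_succ, Nat.add_sub_add_right, hchoose, mul_assoc] at hsum
    exact Nat.eq_of_mul_eq_mul_left n.succ_pos hsum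
  · refine sum_eq_zero fun π _ => Nat.descFactorial_eq_zero_iff_lt.2 ?_
    exact lt_of_mul_lt_mul_right ((numBlocksOfSize_mul_le l π).trans_lt (not_le.1 hrn)) l.zero_le

/-- For `n ≥ 2` and `l ≥ 1`, writing `k_l(π)` for the number of blocks of
size `l`, the second factorial moment satisfies
`Σ_{π ∈ NC(n)} k_l(π)(k_l(π) − 1) = n · binom(2n − 2l − 2, n − 2)`, with the convention
`binom(a,b) = 0` when `a < b` (the `if` captures this convention over the integers:
`n − 2 ≤ 2n − 2l − 2 ↔ 2l ≤ n`). -/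
theorem secondFactorialMoment_numBlocksOfSize (n l : ℕ) (hn : 2 ≤ n) (hl : 1 ≤ l) :
    ∑ π : NCPart n, numBlocksOfSize l π * (numBlocksOfSize l π - 1) =
      if 2 * l ≤ n then n * Nat.choose (2 * n - 2 * l - 2) (n - 2) else 0 := by
  simpa [Nat.descFactorial, mul_comm] using secondFactorialMoment_numBlocksOfSize_general n l 1 hl
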